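/- Let f=(m,n,k) be an integer binary quadratic form with discriminant Δ=k²−4mn>0 not a perfect square. The period Γ(f) is palindromic and of even length if and only if the class of f is (m+n)-symmetric, i.e., f is SL(2,ℤ)-equivalent to its adjoint (−n,−m,k) but not to its conjugate (m,n,−k). -/

import Mathlib

/-- Iterates of the Gauss map starting from `ξ`. -/
noncomputable def gaussIter (ξ : ℝ) : ℕ → ℝ
  | 0 => ξ
  | n + 1 => 1 / (gaussIter ξ n - (⌊gaussIter ξ n⌋ : ℝ))

/-- The `n`-th partial quotient of the regular continued fraction expansion of `ξ`. -/
noncomputable def cfTerm (ξ : ℝ) (n : ℕ) : ℤ := ⌊gaussIter ξ n⌋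

/-- The continued fraction expansion of `ξ` is periodic with period length `P` from index `N`. -/
def IsEventuallyPeriodicCF (ξ : ℝ) (N P : ℕ) : Prop :=
  1 ≤ P ∧ ∀ j : ℕ, cfTerm ξ (N + j + P) = cfTerm ξ (N + j)

/-- `s` is the (minimal) period of the eventually periodic regular continued fraction
expansion of `ξ`; it is well defined up to cyclic permutation. -/
def IsCFPeriod (s : List ℤ) (ξ : ℝ) : Prop :=
  s ≠ [] ∧
  (∃ N : ℕ, ∀ j : ℕ, cfTerm ξ (N + j) = s.getD (j % s.length) 0) ∧
  (∀ P : ℕ, 1 ≤ P → (∃ N : ℕ, IsEventuallyPeriodicCF ξ N P) → s.length ≤ P)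

/-- The value of the binary quadratic form `f = (m, n, k)`, i.e. `m*x^2 + n*y^2 + k*x*y`. -/
def qval (f : ℤ × ℤ × ℤ) (x y : ℤ) : ℤ := f.1 * x ^ 2 + f.2.1 * y ^ 2 + f.2.2 * x * y

/-- The discriminant `k^2 - 4*m*n` of the form `f = (m, n, k)`. -/
def formDisc (f : ℤ × ℤ × ℤ) : ℤ := f.2.2 ^ 2 - 4 * f.1 * f.2.1

/-- `SL(2,ℤ)`-equivalence of binary quadratic forms. -/
def SLEquiv (f g : ℤ × ℤ × ℤ) : Prop :=
  ∃ a b c d : ℤ, a * d - b * c = 1 ∧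
    ∀ x y : ℤ, qval g x y = qval f (a * x + b * y) (c * x + d * y)

/-- The root with the plus sign of `m*ξ^2 + k*ξ + n = 0`, for `f = (m, n, k)`. -/
noncomputable def xiPlus (f : ℤ × ℤ × ℤ) : ℝ :=
  (-(f.2.2 : ℝ) + Real.sqrt ((formDisc f : ℤ) : ℝ)) / (2 * (f.1 : ℝ))

/-- The root with the minus sign of `m*ξ^2 + k*ξ + n = 0`, for `f = (m, n, k)`. -/
noncomputable def xiMinus (f : ℤ × ℤ × ℤ) : ℝ :=
  (-(f.2.2 : ℝ) - Real.sqrt ((formDisc f : ℤ) : ℝ)) / (2 * (f.1 : ℝ))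

/-- The conjugate `(m, n, -k)` of the form `(m, n, k)`. -/
def conjF (f : ℤ × ℤ × ℤ) : ℤ × ℤ × ℤ := (f.1, f.2.1, -f.2.2)

/-- The adjoint `(-n, -m, k)` of the form `(m, n, k)`. -/
def adjF (f : ℤ × ℤ × ℤ) : ℤ × ℤ × ℤ := (-f.2.1, -f.1, f.2.2)

/-- The antipodal `(-n, -m, -k)` of the form `(m, n, k)`. -/
def antipF (f : ℤ × ℤ × ℤ) : ℤ × ℤ × ℤ := (-f.2.1, -f.1, -f.2.2)

/-- A form `(m, n, k)` is primitive if `gcd(m, n, k) = 1`. -/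
def IsPrimitiveForm (f : ℤ × ℤ × ℤ) : Prop := Int.gcd f.1 (Int.gcd f.2.1 f.2.2) = 1

/-- A finite sequence is palindromic if some cyclic permutation of it equals its reversal. -/
def Palindromic (s : List ℤ) : Prop := ∃ t : List ℤ, List.IsRotated s t ∧ t.reverse = t

/-- A finite sequence is bipalindromic if some cyclic permutation of it is the concatenation
of two palindrome blocks each of odd length. -/
def Bipalindromic (s : List ℤ) : Prop :=
  ∃ u v : List ℤ, List.IsRotated s (u ++ v) ∧ Odd u.length ∧ Odd v.length ∧
    u.reverse = u ∧ v.reverse = v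

/-- Integer Möbius relation with determinant `e`. -/
def Mob (e : ℤ) (x y : ℝ) : Prop :=
  ∃ a b c d : ℤ, a * d - b * c = e ∧ x * (c * y + d) = a * y + b

/-- Continued fraction tails agree, with shift parity `e`. -/
def TailRel (e : ℤ) (x y : ℝ) : Prop :=
  ∃ p q : ℕ, gaussIter x p = gaussIter y q ∧ (-1 : ℤ) ^ (p + q) = e

theorem mob_symm {e : ℤ} {x y : ℝ} (h : Mob e x y) : Mob e y x := by
  obtain ⟨a, b, c, d, h1, h2⟩ := h
  refine ⟨-d, b, c, -a, by linear_combination h1, ?_⟩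
  push_cast
  linear_combination h2

theorem mob_trans {e e' : ℤ} {x y z : ℝ} (h : Mob e x y) (h' : Mob e' y z) :
    Mob (e * e') x z := by
  obtain ⟨a, b, c, d, h1, h2⟩ := h
  obtain ⟨a', b', c', d', h1', h2'⟩ := h'
  refine ⟨a * a' + b * c', a * b' + b * d', c * a' + d * c', c * b' + d * d', ?_, ?_⟩
  · rw [← h1, ← h1']; ring
  · push_cast
    linear_combination (c' * z + d') * h2 + (a - x * c) * h2'

theorem gauss_add (x : ℝ) (p j : ℕ) : gaussIter x (p + j) = gaussIter (gaussIter x p) j := by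
  induction j with
  | zero => rfl
  | succ j ih => rw [← add_assoc]; simp only [gaussIter, ih]

theorem gauss_one (x : ℝ) : gaussIter x 1 = 1 / (x - (⌊x⌋ : ℝ)) := rfl

theorem irr_gauss {x : ℝ} (hx : Irrational x) (p : ℕ) : Irrational (gaussIter x p) := by
  induction p with
  | zero => exact hx
  | succ p ih =>
    simp only [gaussIter, one_div]
    exact irrational_inv_iff.mpr (ih.sub_intCast _)

theorem fract_pos_irr {x : ℝ} (hx : Irrational x) : 0 < x - (⌊x⌋ : ℝ) := by
  have h1 := Int.floor_le x
  have h2 : x ≠ (⌊x⌋ : ℝ) := hx.ne_int _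
  rcases lt_or_eq_of_le h1 with h | h
  · linarith
  · exact absurd h.symm h2

theorem gauss_gt_one {x : ℝ} (hx : Irrational x) (p : ℕ) : 1 < gaussIter x (p + 1) := by
  have h := fract_pos_irr (irr_gauss hx p)
  have h2 := Int.lt_floor_add_one (gaussIter x p)
  simp only [gaussIter]
  rw [lt_div_iff₀ h]
  linarith

theorem cfTerm_pos {x : ℝ} (hx : Irrational x) (p : ℕ) : 1 ≤ cfTerm x (p + 1) := by
  have := gauss_gt_one hx p
  unfold cfTerm
  rw [Int.le_floor]
  push_cast
  linarith

theorem gauss_rec {x : ℝ} (hx : Irrational x) (p : ℕ) :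
    gaussIter x p = cfTerm x p + 1 / gaussIter x (p + 1) := by
  simp only [gaussIter, cfTerm, one_div, inv_inv]
  ring

theorem tail_refl (x : ℝ) : TailRel 1 x x := ⟨0, 0, rfl, by norm_num⟩

theorem tail_symm {e : ℤ} {x y : ℝ} (h : TailRel e x y) : TailRel e y x := by
  obtain ⟨p, q, h1, h2⟩ := h
  exact ⟨q, p, h1.symm, by rw [add_comm]; exact h2⟩

theorem tail_trans {e e' : ℤ} {x y z : ℝ} (h : TailRel e x y) (h' : TailRel e' y z) :
    TailRel (e * e') x z := by
  obtain ⟨p, q, h1, h2⟩ := h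
  obtain ⟨p', q', h1', h2'⟩ := h'
  refine ⟨p + p', q' + q, ?_, ?_⟩
  · rw [gauss_add, h1, gauss_add z, ← h1', ← gauss_add, ← gauss_add, add_comm]
  · rw [← h2, ← h2']; ring

theorem tail_add_int (x : ℝ) (n : ℤ) : TailRel 1 (x + n) x := by
  refine ⟨1, 1, ?_, by norm_num⟩
  rw [gauss_one, gauss_one, Int.floor_add_intCast]
  push_cast
  congr 1
  ring

theorem tail_neg_aux {x : ℝ} (hx : Irrational x) (h : x - (⌊x⌋ : ℝ) < 1 / 2) :
    TailRel (-1) (-x) x := by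
  have h0 := fract_pos_irr hx
  set t := x - (⌊x⌋ : ℝ) with ht
  have hf : ⌊-x⌋ = -⌊x⌋ - 1 := by
    rw [Int.floor_eq_iff]; push_cast; constructor <;> linarith
  have h1 : gaussIter (-x) 1 = 1 / (1 - t) := by
    rw [gauss_one, hf, ht]; push_cast; congr 1; ring
  have h1t : 0 < 1 - t := by linarith
  have h2 : gaussIter (-x) 2 = 1 / t - 1 := by
    have hfl : ⌊1 / (1 - t)⌋ = 1 := by
      rw [Int.floor_eq_iff]; push_cast
      constructor
      · rw [le_div_iff₀ h1t]; linarith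
      · rw [div_lt_iff₀ h1t]; linarith
    have : gaussIter (-x) 2 = 1 / (gaussIter (-x) 1 - (⌊gaussIter (-x) 1⌋ : ℝ)) := rfl
    rw [this, h1, hfl]
    have e : 1 / (1 - t) - ((1 : ℤ) : ℝ) = t / (1 - t) := by
      push_cast
      field_simp
      ring
    rw [e, one_div_div]
    field_simp
  refine ⟨3, 2, ?_, by norm_num⟩
  have a1 : gaussIter (-x) 3 = gaussIter (gaussIter (-x) 2) 1 := gauss_add _ 2 1
  have a2 : gaussIter x 2 = gaussIter (gaussIter x 1) 1 := gauss_add _ 1 1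
  rw [a1, a2, h2, gauss_one x, ← ht, gauss_one, gauss_one, Int.floor_sub_one]
  push_cast
  congr 1
  ring

theorem tail_neg {x : ℝ} (hx : Irrational x) : TailRel (-1) (-x) x := by
  by_cases h : x - (⌊x⌋ : ℝ) < 1 / 2
  · exact tail_neg_aux hx h
  · have hf : ⌊-x⌋ = -⌊x⌋ - 1 := by
      have h0 := fract_pos_irr hx
      have := Int.lt_floor_add_one x
      rw [Int.floor_eq_iff]; push_cast; constructor <;> linarith
    have hne : x - (⌊x⌋ : ℝ) ≠ 1 / 2 := by
      intro h'
      have := (hx.sub_intCast ⌊x⌋).ne_rat (1 / 2)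
      apply this
      rw [h']; push_cast; rfl
    have hlt : 1 / 2 < x - (⌊x⌋ : ℝ) := lt_of_le_of_ne (not_lt.mp h) (Ne.symm hne)
    have := tail_neg_aux hx.neg (by rw [hf]; push_cast; linarith)
    rw [neg_neg] at this
    exact tail_symm this

theorem tail_inv_gt {x : ℝ} (h : 1 < x) : TailRel (-1) x⁻¹ x := by
  refine ⟨1, 0, ?_, by norm_num⟩
  have : ⌊x⁻¹⌋ = 0 := by
    rw [Int.floor_eq_iff]
    push_cast
    exact ⟨by positivity, by simpa using inv_lt_one_of_one_lt₀ h⟩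
  rw [gauss_one, this]
  simp [gaussIter]

theorem tail_inv_pos {x : ℝ} (hx : Irrational x) (h : 0 < x) : TailRel (-1) x⁻¹ x := by
  rcases lt_trichotomy x 1 with h1 | h1 | h1
  · have := tail_inv_gt ((one_lt_inv₀ h).mpr h1)
    rw [inv_inv] at this
    exact tail_symm this
  · exact absurd h1 (by simpa using hx.ne_nat 1)
  · exact tail_inv_gt h1

theorem tail_inv {x : ℝ} (hx : Irrational x) : TailRel (-1) x⁻¹ x := by
  rcases lt_trichotomy x 0 with h1 | h1 | h1
  · have h2 := tail_inv_pos hx.neg (by linarith)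
    have h3 : TailRel (-1) (-(-x)⁻¹) (-x)⁻¹ := tail_neg (irrational_inv_iff.mpr hx.neg)
    have h4 := tail_trans (tail_trans h3 h2) (tail_neg hx)
    rw [inv_neg, neg_neg] at h4
    simpa using h4
  · exact absurd h1 (by simpa using hx.ne_nat 0)
  · exact tail_inv_pos hx h1

theorem lin_irr {y : ℝ} (hy : Irrational y) {a b : ℤ} (h : (a : ℝ) * y + b = 0) :
    a = 0 ∧ b = 0 := by
  by_cases ha : a = 0
  · subst ha; simp at h; exact ⟨rfl, h⟩
  · exfalso
    have ha' : (a : ℝ) ≠ 0 := by exact_mod_cast ha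
    apply hy.ne_rat ((-b : ℚ) / a)
    push_cast
    field_simp
    linarith

theorem mob_to_tail : ∀ (N : ℕ) (e a b c d : ℤ) (x y : ℝ), c.natAbs ≤ N → Irrational x →
    Irrational y → (e = 1 ∨ e = -1) → a * d - b * c = e → x * (c * y + d) = a * y + b →
    TailRel e x y := by
  have base : ∀ (e a b d : ℤ) (x y : ℝ), Irrational x → Irrational y → (e = 1 ∨ e = -1) →
      a * d = e → x * d = a * y + b → TailRel e x y := by
    intro e a b d x y hx hy he h1 h2
    have hd : d = 1 ∨ d = -1 := by
      apply Int.isUnit_iff.mp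
      apply isUnit_of_dvd_unit (Dvd.intro_left a h1)
      exact Int.isUnit_iff.mpr he
    have hdd : (d : ℝ) * d = 1 := by rcases hd with rfl | rfl <;> norm_num
    have h1' : (a : ℝ) * d = e := by exact_mod_cast h1
    have hxe : x = e * y + ((b * d : ℤ) : ℝ) := by
      push_cast
      linear_combination d * h2 - x * hdd + y * h1'
    rw [hxe]
    rcases he with rfl | rfl
    · simpa using tail_add_int y (b * d)
    · have := tail_trans (tail_add_int (-y) (b * d)) (tail_neg hy)
      simpa using this
  intro N
  induction N with
  | zero =>
    intro e a b c d x y hc hx hy he h1 h2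
    have : c = 0 := by omega
    subst this
    exact base e a b d x y hx hy he (by simpa using h1) (by simpa using h2)
  | succ N ih =>
    intro e a b c d x y hc hx hy he h1 h2
    by_cases hc0 : c = 0
    · subst hc0
      exact base e a b d x y hx hy he (by simpa using h1) (by simpa using h2)
    set q := a / c with hq
    have ha : a % c = a - c * q := by rw [hq, Int.emod_def]
    have hlt : (a % c).natAbs ≤ N := by
      have := Int.emod_lt_abs a hc0
      rw [Int.abs_eq_natAbs] at this
      have := Int.emod_nonneg a hc0
      omega
    have hz : Irrational (x - q) := hx.sub_intCast q
    have hz0 : x - q ≠ 0 := by simpa using hz.ne_nat 0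
    have h3 : (x - q) * (c * y + d) = (a % c : ℤ) * y + ((b - q * d : ℤ) : ℝ) := by
      rw [ha]; push_cast; linear_combination h2
    have h4 := ih (-e) c d (a % c) (b - q * d) (x - q)⁻¹ y hlt (irrational_inv_iff.mpr hz) hy
      (by rcases he with rfl | rfl <;> simp) (by rw [ha, ← h1]; ring)
      (by rw [← h3]; field_simp)
    have h5 := tail_trans (tail_add_int (x - q) q) (tail_trans (tail_symm (tail_inv hz)) h4)
    simpa using h5

theorem mob_step {x : ℝ} (hx : Irrational x) : Mob (-1) x (gaussIter x 1) := by
  refine ⟨⌊x⌋, 1, 1, 0, by ring, ?_⟩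
  have := (fract_pos_irr hx).ne'
  rw [gauss_one]
  push_cast
  field_simp
  ring

theorem mob_gauss {x : ℝ} (hx : Irrational x) (p : ℕ) : Mob ((-1) ^ p) x (gaussIter x p) := by
  induction p with
  | zero => exact ⟨1, 0, 0, 1, by norm_num, by simp [gaussIter]⟩
  | succ p ih =>
    rw [gauss_add, pow_succ]
    exact mob_trans ih (mob_step (irr_gauss hx p))

theorem mob_iff_tail {e : ℤ} (he : e = 1 ∨ e = -1) {x y : ℝ} (hx : Irrational x)
    (hy : Irrational y) : Mob e x y ↔ TailRel e x y := by
  constructor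
  · rintro ⟨a, b, c, d, h1, h2⟩
    exact mob_to_tail _ e a b c d x y le_rfl hx hy he h1 h2
  · rintro ⟨p, q, h1, h2⟩
    have := mob_trans (mob_gauss hx p) (h1 ▸ mob_symm (mob_gauss hy q))
    rwa [← pow_add, h2] at this

theorem cf_contract {x y : ℝ} (hx : Irrational x) (hy : Irrational y)
    (h : ∀ j, cfTerm x j = cfTerm y j) (n : ℕ) :
    ∀ i, |gaussIter x i - gaussIter y i| ≤ (1 / 4) ^ n := by
  induction n with
  | zero =>
    intro i
    have h1 := h i
    have a1 := Int.floor_le (gaussIter x i)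
    have a2 := Int.floor_le (gaussIter y i)
    have a3 := Int.lt_floor_add_one (gaussIter x i)
    have a4 := Int.lt_floor_add_one (gaussIter y i)
    unfold cfTerm at h1
    rw [h1] at a1 a3
    rw [abs_le, pow_zero]
    constructor <;> linarith
  | succ n ih =>
    intro i
    have gx := gauss_gt_one hx
    have gy := gauss_gt_one hy
    have cx : (1 : ℝ) ≤ cfTerm x (i + 1) := by exact_mod_cast cfTerm_pos hx i
    have x1 := gx i
    have x2 := gx (i + 1)
    have y1 := gy i
    have y2 := gy (i + 1)
    have ex0 := gauss_rec hx i
    have ex1 := gauss_rec hx (i + 1)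
    have ey0 := gauss_rec hy i
    have ey1 := gauss_rec hy (i + 1)
    rw [← h] at ey0 ey1
    have ih2 := ih (i + 1 + 1)
    set c0 : ℝ := (cfTerm x i : ℝ)
    set c1 : ℝ := (cfTerm x (i + 1) : ℝ)
    generalize gaussIter x i = X0 at *
    generalize gaussIter x (i + 1) = X1 at *
    generalize gaussIter x (i + 1 + 1) = X2 at *
    generalize gaussIter y i = Y0 at *
    generalize gaussIter y (i + 1) = Y1 at *
    generalize gaussIter y (i + 1 + 1) = Y2 at *
    have px : X1 * X2 = c1 * X2 + 1 := by rw [ex1]; field_simp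
    have py : Y1 * Y2 = c1 * Y2 + 1 := by rw [ey1]; field_simp
    have px2 : 2 ≤ X1 * X2 := by nlinarith
    have py2 : 2 ≤ Y1 * Y2 := by nlinarith
    have key : X0 - Y0 = (X2 - Y2) / ((X1 * X2) * (Y1 * Y2)) := by
      rw [ex0, ey0]
      have hd : Y1 - X1 = (X2 - Y2) / (X2 * Y2) := by
        rw [ex1, ey1]; field_simp; ring
      have : c0 + 1 / X1 - (c0 + 1 / Y1) = (Y1 - X1) / (X1 * Y1) := by field_simp; ring
      rw [this, hd]
      field_simp
    have h4 : 4 ≤ (X1 * X2) * (Y1 * Y2) := by nlinarith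
    rw [key, abs_div, abs_of_pos (by linarith : 0 < (X1 * X2) * (Y1 * Y2)),
      div_le_iff₀ (by linarith), pow_succ]
    have hp : (0 : ℝ) ≤ (1 / 4) ^ n := by positivity
    nlinarith

theorem cf_unique {x y : ℝ} (hx : Irrational x) (hy : Irrational y)
    (h : ∀ j, cfTerm x j = cfTerm y j) : x = y := by
  by_contra hne
  have hpos : 0 < |x - y| := abs_pos.mpr (sub_ne_zero.mpr hne)
  obtain ⟨n, hn⟩ := exists_pow_lt_of_lt_one hpos (by norm_num : (1 / 4 : ℝ) < 1)
  have := cf_contract hx hy h n 0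
  simp only [gaussIter] at this
  linarith

theorem cf_char (X : ℕ → ℝ) (b : ℕ → ℤ) (h1 : ∀ i, X i = b i + 1 / X (i + 1))
    (h2 : ∀ i, 1 < X (i + 1)) (i : ℕ) : gaussIter (X 0) i = X i ∧ cfTerm (X 0) i = b i := by
  have hf : ∀ i, ⌊X i⌋ = b i := by
    intro i
    have := h2 i
    rw [Int.floor_eq_iff, h1 i]
    have p : 0 < 1 / X (i + 1) := by positivity
    have q : 1 / X (i + 1) < 1 := by rw [div_lt_one (by linarith)]; exact this
    constructor <;> linarith
  have hg : ∀ i, gaussIter (X 0) i = X i := by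
    intro i
    induction i with
    | zero => rfl
    | succ i ih =>
      simp only [gaussIter, ih, hf]
      have := h1 i
      have e : X i - b i = 1 / X (i + 1) := by linarith
      rw [e, one_div_one_div]
  exact ⟨hg i, by unfold cfTerm; rw [hg, hf]⟩

/-- `x` and `x'` are conjugate in `ℚ(D)`. -/
def ConjRel (D x x' : ℝ) : Prop := ∃ u v : ℚ, x = u + v * D ∧ x' = u - v * D

theorem ratlin {D : ℝ} (hD : Irrational D) {u v : ℚ} (h : (u : ℝ) + v * D = 0) :
    u = 0 ∧ v = 0 := by
  by_cases hv : v = 0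
  · subst hv; simp at h; exact ⟨h, rfl⟩
  · exfalso
    have hv' : (v : ℝ) ≠ 0 := by exact_mod_cast hv
    apply hD.ne_rat (-u / v)
    push_cast
    field_simp
    linarith

theorem conj_fun {D x y z : ℝ} (hD : Irrational D) (h1 : ConjRel D x y) (h2 : ConjRel D x z) :
    y = z := by
  obtain ⟨u, v, h1, rfl⟩ := h1
  obtain ⟨u', v', h2, rfl⟩ := h2
  have := ratlin hD (u := u - u') (v := v - v') (by push_cast; linarith)
  have a : u = u' := by linarith [this.1]
  have b : v = v' := by linarith [this.2]
  rw [a, b]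

theorem conj_irr {D x y : ℝ} (hD : Irrational D) (hx : Irrational x) (h1 : ConjRel D x y) :
    Irrational y := by
  obtain ⟨u, v, h1, rfl⟩ := h1
  have hv : v ≠ 0 := by
    rintro rfl
    apply hx.ne_rat u
    simp [h1]
  exact (hD.ratCast_mul hv).ratCast_sub u

theorem conj_ne {D x y : ℝ} (hD : Irrational D) (hx : Irrational x) (h1 : ConjRel D x y) :
    x ≠ y := by
  obtain ⟨u, v, h1, rfl⟩ := h1
  intro h
  have := ratlin hD (u := 0) (v := v) (by push_cast; linarith)
  apply hx.ne_rat u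
  simp [h1, this.2]

theorem conj_step {D x y : ℝ} (hD : Irrational D) (hD2 : ∃ q : ℚ, D * D = q)
    (hx : Irrational x) (h1 : ConjRel D x y)
    (n : ℤ) : ConjRel D (1 / (x - n)) (1 / (y - n)) := by
  have hy := conj_irr hD hx h1
  obtain ⟨u, v, h1, h2⟩ := h1
  obtain ⟨q, hq⟩ := hD2
  have hx0 : x - n ≠ 0 := sub_ne_zero.mpr (hx.ne_int n)
  have hy0 : y - n ≠ 0 := sub_ne_zero.mpr (hy.ne_int n)
  have hm : (x - n) * (y - n) = (((u - n) ^ 2 - v ^ 2 * q : ℚ) : ℝ) := by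
    rw [h1, h2]; push_cast; rw [← hq]; ring
  set w : ℚ := (u - n) ^ 2 - v ^ 2 * q
  have hw0 : (w : ℝ) ≠ 0 := by rw [← hm]; exact mul_ne_zero hx0 hy0
  have ex : 1 / (x - n) = (y - n) / w := by rw [← hm]; field_simp
  have ey : 1 / (y - n) = (x - n) / w := by rw [← hm]; field_simp
  refine ⟨(u - n) / w, -v / w, ?_, ?_⟩
  · rw [ex, h2]; push_cast; field_simp; ring
  · rw [ey, h1]; push_cast; field_simp; ring

/-- The conjugates of the Gauss iterates. -/
noncomputable def cjIter (x x' : ℝ) : ℕ → ℝ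
  | 0 => x'
  | n + 1 => 1 / (cjIter x x' n - (cfTerm x n : ℝ))

theorem cj_conj {D x x' : ℝ} (hD : Irrational D) (hD2 : ∃ q : ℚ, D * D = q)
    (hx : Irrational x) (h : ConjRel D x x') (i : ℕ) :
    ConjRel D (gaussIter x i) (cjIter x x' i) := by
  induction i with
  | zero => exact h
  | succ i ih => exact conj_step hD hD2 (irr_gauss hx i) ih _

theorem cj_rec (x x' : ℝ) (i : ℕ) :
    cjIter x x' i = cfTerm x i + 1 / cjIter x x' (i + 1) := by
  simp only [cjIter, one_div, inv_inv]
  ring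

theorem cj_neg {D x x' : ℝ} (hD : Irrational D) (hD2 : ∃ q : ℚ, D * D = q)
    (hx : Irrational x) (h : ConjRel D x x') : ∃ i0, ∀ i, i0 ≤ i → cjIter x x' i < 0 := by
  have hc := cj_conj hD hD2 hx h
  have hirr := fun i => conj_irr hD (irr_gauss hx i) (hc i)
  have hex : ∃ i, cjIter x x' (i + 1) < 0 := by
    by_contra hcon
    push Not at hcon
    have hpos : ∀ i, 0 < cjIter x x' (i + 1) := fun i =>
      lt_of_le_of_ne (hcon i) (by simpa using ((hirr (i + 1)).ne_nat 0).symm)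
    have hgt : ∀ i, 1 < cjIter x x' (i + 1) := by
      intro i
      rw [cj_rec]
      have c : (1 : ℝ) ≤ cfTerm x (i + 1) := by exact_mod_cast cfTerm_pos hx i
      have := hpos (i + 1)
      have : 0 < 1 / cjIter x x' (i + 1 + 1) := by positivity
      linarith
    have hch := cf_char (fun i => cjIter x x' (i + 1)) (fun i => cfTerm x (i + 1))
      (fun i => cj_rec x x' (i + 1)) (fun i => hgt (i + 1))
    refine conj_ne hD (irr_gauss hx 1) (hc 1) (cf_unique (irr_gauss hx 1) (hirr 1) ?_)
    intro j
    have := (hch j).2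
    simp only [zero_add] at this
    rw [this]
    unfold cfTerm
    rw [← gauss_add, add_comm]
  obtain ⟨i0, hi0⟩ := hex
  refine ⟨i0 + 1, ?_⟩
  intro i hi
  induction i, hi using Nat.le_induction with
  | base => exact hi0
  | succ i hi ih =>
    obtain ⟨j, rfl⟩ : ∃ j, i = j + 1 := ⟨i - 1, by omega⟩
    have c : (1 : ℝ) ≤ cfTerm x (j + 1) := by exact_mod_cast cfTerm_pos hx j
    rw [cjIter]
    exact one_div_neg.mpr (by linarith)

theorem cj_mob {x x' : ℝ} (h : ∀ i, Irrational (cjIter x x' i)) (p : ℕ) :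
    Mob ((-1) ^ p) x' (cjIter x x' p) := by
  induction p with
  | zero => exact ⟨1, 0, 0, 1, by norm_num, by simp [cjIter]⟩
  | succ p ih =>
    rw [pow_succ]
    refine mob_trans ih ⟨cfTerm x p, 1, 1, 0, by ring, ?_⟩
    have : cjIter x x' (p + 1) ≠ 0 := by simpa using (h (p + 1)).ne_nat 0
    rw [cj_rec x x' p]
    push_cast
    field_simp
    ring

/-- Periodic extension of a list to the integers. -/
def extS (s : List ℤ) (i : ℤ) : ℤ := s.getD (i % (s.length : ℤ)).toNat 0

theorem extS_nat (s : List ℤ) (i : ℕ) : extS s i = s.getD (i % s.length) 0 := by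
  unfold extS
  congr 1

theorem ext_add_mul (s : List ℤ) (i z : ℤ) : extS s (i + s.length * z) = extS s i := by
  unfold extS
  rw [Int.add_mul_emod_self_left]

/-- The combinatorial symmetry. -/
def SymCF (e : ℤ) (s : List ℤ) : Prop :=
  ∃ p q : ℕ, (-1 : ℤ) ^ (p + q) = e ∧ ∀ i : ℤ, extS s (p + i) = extS s (-(1 + q + i))

theorem ext_of_nat (s : List ℤ) (hs : s ≠ []) (a b : ℤ)
    (h : ∀ j : ℕ, extS s (a + j) = extS s (b - j)) (i : ℤ) : extS s (a + i) = extS s (b - i) := by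
  have hr : (s.length : ℤ) ≠ 0 := by simpa using hs
  have h0 := h (i % s.length).toNat
  rw [Int.toNat_of_nonneg (Int.emod_nonneg _ hr)] at h0
  have e := Int.emod_add_mul_ediv i s.length
  rw [← ext_add_mul s (a + i % s.length) (i / s.length),
    ← ext_add_mul s (b - i % s.length) (-(i / s.length))] at h0
  convert h0 using 2 <;> linarith

theorem mob_iff_sym {D x x' : ℝ} (hD : Irrational D) (hD2 : ∃ q : ℚ, D * D = q)
    (hx : Irrational x) (h : ConjRel D x x') {s : List ℤ} (hs : s ≠ [])
    (hper : ∃ N : ℕ, ∀ j : ℕ, cfTerm x (N + j) = s.getD (j % s.length) 0)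
    {e : ℤ} (he : e = 1 ∨ e = -1) : Mob e x x' ↔ SymCF e s := by
  have hc := cj_conj hD hD2 hx h
  have hirr := fun i => conj_irr hD (irr_gauss hx i) (hc i)
  obtain ⟨i0, hneg⟩ := cj_neg hD hD2 hx h
  obtain ⟨N0, hN0⟩ := hper
  have hr : 1 ≤ s.length := List.length_pos_iff.mpr hs
  obtain ⟨N, hN, hiN⟩ : ∃ N : ℕ, (∀ j : ℕ, cfTerm x (N + j) = extS s j) ∧ i0 ≤ N := by
    refine ⟨N0 + s.length * i0, ?_, ?_⟩
    · intro j
      rw [add_assoc, hN0, extS_nat, Nat.mul_add_mod]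
    · nlinarith
  have hθ := irr_gauss hx N
  have hθper : ∀ j, gaussIter x (N + (j + s.length)) = gaussIter x (N + j) := by
    intro j
    apply cf_unique (irr_gauss hx _) (irr_gauss hx _)
    intro i
    have e1 := hN (j + s.length + i)
    have e2 := hN (j + i)
    unfold cfTerm at *
    rw [← gauss_add, ← gauss_add, add_assoc N, add_assoc N, e1, e2]
    have := ext_add_mul s ((j : ℤ) + i) 1
    push_cast
    rw [← this]
    congr 1
    ring
  have hcper : ∀ j, cjIter x x' (N + (j + s.length)) = cjIter x x' (N + j) := by
    intro j
    have := hc (N + (j + s.length))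
    rw [hθper] at this
    exact conj_fun hD this (hc _)
  set φ : ℕ → ℝ := fun j => -1 / cjIter x x' (N + j) with hφ
  have hφper : ∀ j, φ (j + s.length) = φ j := by
    intro j; simp only [hφ, hcper]
  have hφpos : ∀ j, 0 < φ j := by
    intro j
    simp only [hφ]
    exact div_pos_of_neg_of_neg (by norm_num) (hneg _ (by omega))
  have hφrec : ∀ j, φ (j + 1) = extS s j + 1 / φ j := by
    intro j
    simp only [hφ]
    rw [← hN, cj_rec x x' (N + j), ← add_assoc]
    have : cjIter x x' (N + j + 1) ≠ 0 := (hneg _ (by omega)).ne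
    rw [one_div_div]
    field_simp
    ring
  have hext1 : ∀ j : ℕ, 1 ≤ extS s j := by
    intro j
    have e1 := hN (j + s.length)
    have e2 := cfTerm_pos hx (N + j + s.length - 1)
    have e3 : N + j + s.length - 1 + 1 = N + (j + s.length) := by omega
    rw [e3, e1] at e2
    have := ext_add_mul s j 1
    push_cast at e2
    rw [mul_one] at this
    rwa [this] at e2
  have hφgt1 : ∀ j, 1 < φ (j + 1) := by
    intro j
    have h1 := hφpos j
    have h2 : (1 : ℝ) ≤ extS s j := by exact_mod_cast hext1 j
    rw [hφrec]
    have : 0 < 1 / φ j := by positivity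
    linarith
  have hch := cf_char (fun i => φ ((s.length - 1) * (i + 1) + 1)) (fun i => extS s (-(1 + i)))
    (by
      intro i
      rw [hφrec]
      obtain ⟨r, hr⟩ : ∃ r, s.length = r + 1 := ⟨s.length - 1, by omega⟩
      have e1 : (s.length - 1) * (i + 1 + 1) + 1 = (s.length - 1) * (i + 1) + s.length := by
        rw [hr]; simp; ring
      rw [e1, hφper]
      congr 2
      rw [← ext_add_mul s (-(1 + i)) (i + 1)]
      congr 1
      rw [hr]; simp; ring)
    (fun i => hφgt1 _)
  have hX0 : φ ((s.length - 1) * (0 + 1) + 1) = φ 0 := by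
    have := hφper 0
    rw [← this]
    congr 1
    omega
  simp only [hX0] at hch
  have hφirr : Irrational (φ 0) := by
    simp only [hφ, neg_div, one_div]
    exact (irrational_inv_iff.mpr (hirr _)).neg
  have hMφ : Mob 1 (cjIter x x' N) (φ 0) := by
    refine ⟨0, -1, 1, 0, by norm_num, ?_⟩
    have : cjIter x x' N ≠ 0 := (hneg _ hiN).ne
    simp only [hφ, add_zero]
    push_cast
    field_simp
    ring
  have hsq : ((-1 : ℤ) ^ N) * (-1) ^ N = 1 := by
    rw [← mul_pow]; norm_num
  have step1 : Mob e x x' ↔ Mob e (gaussIter x N) (φ 0) := by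
    constructor
    · intro hm
      have := mob_trans (mob_trans (mob_symm (mob_gauss hx N)) hm)
        (mob_trans (cj_mob hirr N) hMφ)
      have ee : (-1) ^ N * e * ((-1) ^ N * 1) = e := by linear_combination e * hsq
      rwa [ee] at this
    · intro hm
      have := mob_trans (mob_trans (mob_gauss hx N) hm)
        (mob_symm (mob_trans (cj_mob hirr N) hMφ))
      have ee : (-1) ^ N * e * ((-1) ^ N * 1) = e := by linear_combination e * hsq
      rwa [ee] at this
  rw [step1, mob_iff_tail he hθ hφirr]
  have cfθ : ∀ j : ℕ, cfTerm (gaussIter x N) j = extS s j := by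
    intro j
    rw [← hN]; unfold cfTerm; rw [gauss_add]
  have shift : ∀ (y : ℝ) (p j : ℕ), cfTerm (gaussIter y p) j = cfTerm y (p + j) := by
    intro y p j; unfold cfTerm; rw [gauss_add]
  constructor
  · rintro ⟨p, q, h1, h2⟩
    refine ⟨p, q, h2, ?_⟩
    have := ext_of_nat s hs p (-(1 + q)) (by
      intro j
      have e1 := cfθ (p + j)
      have e2 := (hch (q + j)).2
      rw [← shift] at e1 e2
      rw [h1, e2] at e1
      push_cast at e1
      rw [← e1]
      congr 1
      ring)
    intro i
    rw [this]
    congr 1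
    ring
  · rintro ⟨p, q, h1, h2⟩
    refine ⟨p, q, ?_, h1⟩
    apply cf_unique (irr_gauss hθ p) (irr_gauss hφirr q)
    intro j
    rw [shift _ p j, shift _ q j, cfθ, (hch _).2]
    have := h2 j
    push_cast
    rw [this]
    congr 1
    ring

theorem sym_even_pal {s : List ℤ} (hs : s ≠ []) (h : SymCF 1 s) : Palindromic s := by
  obtain ⟨p, q, h1, h2⟩ := h
  have hr : (s.length : ℤ) ≠ 0 := by simpa using hs
  have hev : Even (p + q) := by
    rcases Nat.even_or_odd (p + q) with h | h
    · exact h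
    · rw [h.neg_one_pow] at h1; norm_num at h1
  obtain ⟨t, ht⟩ := hev
  obtain ⟨c, hc⟩ : ∃ c : ℤ, (p : ℤ) - q = 2 * c := ⟨t - q, by omega⟩
  have hA : ∀ i, extS s (c + i) = extS s (c - 1 - i) := by
    intro i
    have := h2 (c + i - p)
    rw [show (p : ℤ) + (c + i - p) = c + i by ring] at this
    rw [this]; congr 1; omega
  set n := (c % s.length).toNat with hn
  have hn' : (n : ℤ) = c % s.length := Int.toNat_of_nonneg (Int.emod_nonneg _ hr)
  have hrot : ∀ (i : ℕ) (hi : i < (s.rotate n).length), (s.rotate n)[i] = extS s (c + i) := by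
    intro i hi
    rw [List.getElem_rotate]
    have e : extS s (c + i) = extS s ((i + n : ℕ) : ℤ) := by
      rw [← ext_add_mul s ((i + n : ℕ) : ℤ) (c / s.length)]
      congr 1
      push_cast
      rw [hn']
      have := Int.emod_add_mul_ediv c s.length
      linarith
    rw [e, extS_nat, List.getD_eq_getElem]
  refine ⟨s.rotate n, ⟨n, rfl⟩, ?_⟩
  apply List.ext_getElem
  · simp
  · intro i hi hi'
    rw [List.getElem_reverse, hrot, hrot, hA i, ← ext_add_mul s (c - 1 - i) 1]
    congr 1
    simp at hi' ⊢
    omega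

theorem pal_sym {s : List ℤ} (hs : s ≠ []) (hev : Even s.length) (h : Palindromic s) :
    SymCF 1 s := by
  obtain ⟨t, ⟨n, rfl⟩, ht⟩ := h
  have hr : (s.length : ℤ) ≠ 0 := by simpa using hs
  have hl : 1 ≤ s.length := List.length_pos_iff.mpr hs
  have hrot : ∀ (i : ℕ) (hi : i < (s.rotate n).length), (s.rotate n)[i] = extS s (n + i) := by
    intro i hi
    rw [List.getElem_rotate, show (n : ℤ) + i = ((i + n : ℕ) : ℤ) by push_cast; ring,
      extS_nat, List.getD_eq_getElem]
  have hA : ∀ i : ℕ, i < s.length → extS s (n + i) = extS s (n - 1 - i) := by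
    intro i hi
    have hi' : i < (s.rotate n).length := by simpa using hi
    have h1 : (s.rotate n)[i] = (s.rotate n).reverse[i]'(by simpa using hi) := by
      simp only [ht]
    rw [List.getElem_reverse, hrot, hrot] at h1
    rw [h1, ← ext_add_mul s (n - 1 - i) 1]
    congr 1
    simp
    omega
  have hA2 : ∀ i : ℤ, extS s (n + i) = extS s (n - 1 - i) := by
    apply ext_of_nat s hs
    intro j
    have := hA (j % s.length) (Nat.mod_lt _ (by omega))
    push_cast at this
    have e := Int.emod_add_mul_ediv (j : ℤ) s.length
    rw [← ext_add_mul s (n + (j : ℤ) % s.length) ((j : ℤ) / s.length),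
      ← ext_add_mul s (n - 1 - (j : ℤ) % s.length) (-((j : ℤ) / s.length))] at this
    convert this using 2 <;> linarith
  obtain ⟨r, hr1⟩ : ∃ r, s.length = r + 1 := ⟨s.length - 1, by omega⟩
  refine ⟨n, n * r, ?_, ?_⟩
  · apply Even.neg_one_pow
    have : n + n * r = n * s.length := by rw [hr1]; ring
    rw [this]
    exact hev.mul_left n
  · intro i
    rw [hA2, ← ext_add_mul s (-(1 + ((n * r : ℕ) : ℤ) + i)) n]
    congr 1
    rw [hr1]
    push_cast
    ring

theorem sym_odd {s : List ℤ} (hodd : Odd s.length) (h : SymCF 1 s) : SymCF (-1) s := by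
  obtain ⟨p, q, h1, h2⟩ := h
  refine ⟨p, q + s.length, ?_, ?_⟩
  · rw [← add_assoc, pow_add, h1, hodd.neg_one_pow]; norm_num
  · intro i
    rw [h2, ← ext_add_mul s (-(1 + ((q + s.length : ℕ) : ℤ) + i)) 1]
    congr 1
    push_cast
    ring

theorem sym_excl {s : List ℤ} {x : ℝ} (h : IsCFPeriod s x) (hev : Even s.length)
    (h1 : SymCF 1 s) (h2 : SymCF (-1) s) : False := by
  obtain ⟨hs, ⟨N, hN⟩, hmin⟩ := h
  obtain ⟨p, q, hp, hA⟩ := h1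
  obtain ⟨p', q', hp', hA'⟩ := h2
  have hr : (s.length : ℤ) ≠ 0 := by simpa using hs
  have hl : 1 ≤ s.length := List.length_pos_iff.mpr hs
  have e1 : Even (p + q) := by
    rcases Nat.even_or_odd (p + q) with h | h
    · exact h
    · rw [h.neg_one_pow] at hp; norm_num at hp
  have e2 : Odd (p' + q') := by
    rcases Nat.even_or_odd (p' + q') with h | h
    · rw [h.neg_one_pow] at hp'; norm_num at hp'
    · exact h
  set w : ℤ := (p - q) - (p' - q') with hw
  have hper : ∀ i, extS s (i + w) = extS s i := by
    intro i
    have a1 := hA (i + w - p)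
    have a2 := hA' (i - p')
    rw [show (p : ℤ) + (i + w - p) = i + w by ring] at a1
    rw [show (p' : ℤ) + (i - p') = i by ring] at a2
    rw [a1, a2]
    congr 1
    rw [hw]; ring
  have hP0 := Int.emod_nonneg w hr
  have hPlt := Int.emod_lt_of_pos w (b := s.length) (by omega)
  have hdm := Int.emod_add_mul_ediv w s.length
  have hPne : w % s.length ≠ 0 := by
    intro h0
    obtain ⟨a, ha⟩ := e1
    obtain ⟨b, hb⟩ := e2
    obtain ⟨r, hr⟩ := hev
    have hd : (s.length : ℤ) ∣ w := Int.dvd_of_emod_eq_zero h0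
    have h2 : (2 : ℤ) ∣ s.length := ⟨r, by omega⟩
    have := h2.trans hd
    omega
  have := hmin (w % s.length).toNat (by omega) ⟨N, by omega, by
    intro j
    rw [add_assoc, hN, hN, ← extS_nat, ← extS_nat]
    push_cast
    rw [Int.toNat_of_nonneg hP0, ← hper j, ← ext_add_mul s _ (w / s.length)]
    congr 1
    linarith⟩
  omega

theorem mob_roots {m n k e : ℤ} {D x x' : ℝ} (hD : Irrational D)
    (hDD : D * D = ((k ^ 2 - 4 * m * n : ℤ) : ℝ)) (hm : m ≠ 0)
    (hx : x = (-(k : ℝ) + D) / (2 * m)) (hx' : x' = (-(k : ℝ) - D) / (2 * m)) :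
    Mob e x x' ↔ ∃ p q t : ℤ, q ^ 2 + t * p = -e ∧ p * n - q * k = t * m := by
  have hm' : (m : ℝ) ≠ 0 := by exact_mod_cast hm
  have h1 : 2 * m * x = -k + D := by rw [hx]; field_simp
  have h2 : 2 * m * x' = -k - D := by rw [hx']; field_simp
  push_cast at hDD
  have h3 : m * (x * x') = n := by
    have : (4 * m) * (m * (x * x')) = (4 * m) * n := by
      linear_combination (2 * m * x') * h1 + (-k + D) * h2 - hDD
    exact mul_left_cancel₀ (by positivity) this
  constructor
  · rintro ⟨a, b, c, d, hdet, heq⟩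
    have h4 : ((d + a : ℤ) : ℝ) * D + ((2 * c * n - d * k + a * k - 2 * b * m : ℤ) : ℝ) = 0 := by
      push_cast
      linear_combination 2 * m * heq - 2 * c * h3 - d * h1 + a * h2
    obtain ⟨h5, h6⟩ := lin_irr hD h4
    have h7 : a = -d := by linarith
    subst h7
    refine ⟨c, d, b, by linear_combination -hdet, by linarith⟩
  · rintro ⟨p, q, t, hdet, heq⟩
    refine ⟨-q, t, p, q, by linear_combination -hdet, ?_⟩
    have heq' : (p : ℝ) * n - q * k = t * m := by exact_mod_cast heq
    have : 2 * m * (x * (p * x' + q)) = 2 * m * (((-q : ℤ) : ℝ) * x' + t) := by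
      push_cast
      linear_combination 2 * p * h3 + q * h1 + q * h2 + 2 * heq'
    exact mul_left_cancel₀ (by positivity) this

theorem sl_coeffs {m n k m' n' k' a b c d : ℤ}
    (h : ∀ x y : ℤ, qval (m', n', k') x y = qval (m, n, k) (a * x + b * y) (c * x + d * y)) :
    m' = m * a ^ 2 + n * c ^ 2 + k * a * c ∧ n' = m * b ^ 2 + n * d ^ 2 + k * b * d ∧
      k' = 2 * m * a * b + 2 * n * c * d + k * (a * d + b * c) := by
  have h1 := h 1 0
  have h2 := h 0 1
  have h3 := h 1 1
  simp only [qval] at h1 h2 h3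
  ring_nf at h1 h2 h3
  refine ⟨?_, ?_, ?_⟩
  · linear_combination h1
  · linear_combination h2
  · linear_combination h3 - h1 - h2

theorem sl_adj {m n k : ℤ} (hm : m ≠ 0) : SLEquiv (m, n, k) (adjF (m, n, k)) ↔
    ∃ p q t : ℤ, q ^ 2 + t * p = -1 ∧ p * n - q * k = t * m := by
  constructor
  · rintro ⟨a, b, c, d, hdet, h⟩
    obtain ⟨h1, h2, h3⟩ := sl_coeffs h
    have hbc : b = c := by
      have : (2 * m) * (b - c) = 0 := by
        linear_combination -d * h3 + 2 * c * h2 - (2 * m * b + k * d) * hdet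
      rcases mul_eq_zero.mp this with h | h
      · omega
      · omega
    subst hbc
    refine ⟨d, -b, -a, by linear_combination -hdet, ?_⟩
    have : 2 * (m * a + k * b + n * d) = 0 := by
      linear_combination -2 * d * h1 + b * h3 - (2 * m * a + k * b) * hdet
    linarith
  · rintro ⟨p, q, t, hdet, heq⟩
    refine ⟨-t, -q, -q, p, by linear_combination -hdet, ?_⟩
    intro x y
    simp only [qval, adjF]
    linear_combination (t * x ^ 2 - p * y ^ 2 + 2 * q * x * y) * heq +
      (-n * x ^ 2 - m * y ^ 2 + k * x * y) * hdet

theorem sl_conj {m n k : ℤ} (hm : m ≠ 0) : SLEquiv (m, n, k) (conjF (m, n, k)) ↔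
    ∃ p q t : ℤ, q ^ 2 + t * p = - -1 ∧ p * n - q * k = t * m := by
  constructor
  · rintro ⟨a, b, c, d, hdet, h⟩
    obtain ⟨h1, h2, h3⟩ := sl_coeffs h
    have had : a = d := by
      have : (2 * m) * (a - d) = 0 := by
        linear_combination -2 * d * h1 + c * h3 - (2 * m * a + k * c) * hdet
      rcases mul_eq_zero.mp this with h | h
      · omega
      · omega
    subst had
    refine ⟨c, -a, -b, by linear_combination hdet, ?_⟩
    have : 2 * (m * b + k * a + n * c) = 0 := by
      linear_combination -a * h3 + 2 * c * h2 - (2 * m * b + k * a) * hdet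
    linarith
  · rintro ⟨p, q, t, hdet, heq⟩
    refine ⟨-q, -t, p, -q, by linear_combination hdet, ?_⟩
    intro x y
    simp only [qval, conjF]
    linear_combination (-p * x ^ 2 + t * y ^ 2 + 2 * q * x * y) * heq +
      (-m * x ^ 2 - n * y ^ 2 + k * x * y) * hdet

/-- The period `Γ(m,n,k)` is palindromic and even iff the class `C(m,n,k)` is
`(m+n)`-symmetric. -/
theorem statement4 (m n k : ℤ)
    (hpos : 0 < formDisc (m, n, k)) (hsq : ¬ IsSquare (formDisc (m, n, k))) :
    ∀ s : List ℤ, IsCFPeriod s (xiPlus (m, n, k)) →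
      ((Palindromic s ∧ Even s.length) ↔
        (SLEquiv (m, n, k) (adjF (m, n, k)) ∧ ¬ SLEquiv (m, n, k) (conjF (m, n, k)))) := by
  intro s hs
  have hm : m ≠ 0 := by
    rintro rfl
    apply hsq
    exact ⟨k, by simp only [formDisc]; ring⟩
  set Δ := formDisc (m, n, k) with hΔ
  have hD : Irrational (Real.sqrt (Δ : ℝ)) := by
    rw [irrational_sqrt_intCast_iff_of_nonneg hpos.le]
    exact hsq
  have hDD : Real.sqrt (Δ : ℝ) * Real.sqrt (Δ : ℝ) = (Δ : ℝ) :=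
    Real.mul_self_sqrt (by exact_mod_cast hpos.le)
  have hm' : (m : ℝ) ≠ 0 := by exact_mod_cast hm
  have hc : ConjRel (Real.sqrt (Δ : ℝ)) (xiPlus (m, n, k)) (xiMinus (m, n, k)) := by
    refine ⟨-k / (2 * m), 1 / (2 * m), ?_, ?_⟩
    · simp only [xiPlus, ← hΔ]; push_cast; field_simp
    · simp only [xiMinus, ← hΔ]; push_cast; field_simp
  have hx : Irrational (xiPlus (m, n, k)) := by
    simp only [xiPlus, ← hΔ]
    have := (hD.intCast_add (-k)).div_intCast (m := 2 * m) (by omega)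
    push_cast at this
    exact this
  have hroots : ∀ e, _ := fun e => mob_roots (m := m) (n := n) (k := k) (e := e)
    (x := xiPlus (m, n, k)) (x' := xiMinus (m, n, k)) hD (by rw [hDD, hΔ]; rfl) hm rfl rfl
  have hsym : ∀ e : ℤ, (e = 1 ∨ e = -1) → _ := fun e he =>
    mob_iff_sym hD ⟨(Δ : ℚ), by rw [hDD]; push_cast; rfl⟩ hx hc hs.1 hs.2.1 he
  rw [sl_adj hm, sl_conj hm, ← hroots, ← hroots, hsym 1 (Or.inl rfl), hsym (-1) (Or.inr rfl)]
  constructor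
  · rintro ⟨hp, hev⟩
    have h1 := pal_sym hs.1 hev hp
    exact ⟨h1, fun h2 => sym_excl hs hev h1 h2⟩
  · rintro ⟨h1, h2⟩
    refine ⟨sym_even_pal hs.1 h1, ?_⟩
    by_contra hodd
    exact h2 (sym_odd (Nat.not_even_iff_odd.mp hodd) h1)
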